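/- Let p : List Γ → ℝ and let w : List Γ have length l. Then the total unnormalized subword weight satisfies Σ_{0 ≤ i < j ≤ l} p(w[i+1:j]) · B(w.take i) · B(w.drop j) = Σ_{g ∈ Seg(w)} (Π_{s ∈ g} p(s)) · |g|, i.e. the sum over all substring positions of the weights ã computed by Algorithm 1 equals the sum over all segmentations of the segmentation weight times the number of segments in that segmentation. (Normalization identity underlying line 12 of Algorithm 1; the scalar specialization of the weighted-subword identity.) -/

import Mathlib

open scoped Classical

variable {Γ : Type*}

/-- A segmentation of a word `w` is a list of nonempty subwords whose concatenation is `w`. -/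
def Seg (w : List Γ) : Set (List (List Γ)) :=
  {g | (∀ s ∈ g, s ≠ []) ∧ g.flatten = w}

theorem Seg.finite (w : List Γ) : (Seg w).Finite := by
  apply Set.Finite.subset
    (Set.finite_range fun c : Composition w.length => w.splitWrtComposition c)
  rintro g ⟨hne, hjoin⟩
  subst hjoin
  have hpos : ∀ {i : ℕ}, i ∈ g.map List.length → 0 < i := by
    intro i hi
    simp only [List.mem_map] at hi
    obtain ⟨s, hs, rfl⟩ := hi
    exact List.length_pos_iff.mpr (hne s hs)
  refine ⟨⟨g.map List.length, hpos, by simp⟩, ?_⟩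
  exact (List.splitWrtComposition_flatten g ⟨g.map List.length, hpos, by simp⟩ rfl)

/-- The (finite) set of segmentations of `w`, as a `Finset`. -/
noncomputable def SegF (w : List Γ) : Finset (List (List Γ)) := (Seg.finite w).toFinset

/-- Total segmentation weight `B(u) = Σ_{g ∈ Seg(u)} Π_{s ∈ g} p(s)`. -/
noncomputable def B (p : List Γ → ℝ) (u : List Γ) : ℝ :=
  ∑ g ∈ SegF u, (g.map p).prod

/-!
A segmentation of `w` with one distinguished segment can be counted in two ways. Choosing the
segmentation first gives the right-hand side, as a segmentation has as many choices of a
distinguished segment as it has segments. Choosing first the position `w[i+1:j]` of the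
distinguished segment leaves independent segmentations of the prefix `w.take i` and the suffix
`w.drop j`, which gives the left-hand side.
-/

/-- A list with a marked entry, seen as the triple of the entries before the mark, the marked
entry, and the entries after it. -/
def markedListEquiv (α : Type*) : (Σ g : List α, Fin g.length) ≃ List α × α × List α where
  toFun x := (x.1.take x.2, x.1[x.2], x.1.drop (x.2 + 1))
  invFun y := ⟨y.1 ++ y.2.1 :: y.2.2, y.1.length, by simp⟩
  left_inv := by
    rintro ⟨g, k⟩
    have hg : g.take k ++ g[k] :: g.drop (k + 1) = g := by simp
    exact Sigma.ext hg ((Fin.heq_ext_iff (congrArg List.length hg)).2 (by simp))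
  right_inv := by
    rintro ⟨a, s, b⟩
    simp

theorem prod_take_mul_getElem_mul_prod_drop {α : Type*} [Monoid α] (l : List α) {k : ℕ}
    (hk : k < l.length) : (l.take k).prod * l[k] * (l.drop (k + 1)).prod = l.prod := by
  rw [← List.prod_take_succ, List.prod_take_mul_prod_drop]

theorem take_append_take_drop_append_drop {α : Type*} (w : List α) {i j : ℕ} (h : i ≤ j) :
    w.take i ++ ((w.drop i).take (j - i) ++ w.drop j) = w := by
  obtain ⟨d, rfl⟩ := Nat.exists_eq_add_of_le h
  rw [Nat.add_sub_cancel_left, List.drop_take_append_drop, List.take_append_drop]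

/-- The positions `(i, j)` of the nonempty substrings `w[i+1:j]` of a word `w` of length `n`. -/
def substringPositions (n : ℕ) : Finset (ℕ × ℕ) :=
  (Finset.range (n + 1) ×ˢ Finset.range (n + 1)).filter fun q => q.1 < q.2

theorem mem_substringPositions {n i j : ℕ} :
    (i, j) ∈ substringPositions n ↔ i < j ∧ j ≤ n := by
  simp only [substringPositions, Finset.mem_filter, Finset.mem_product, Finset.mem_range]
  omega

theorem mem_SegF {w : List Γ} {g : List (List Γ)} :
    g ∈ SegF w ↔ (∀ s ∈ g, s ≠ []) ∧ g.flatten = w := by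
  simp [SegF, Seg]

/-- The segmentations of `w` with a distinguished segment `s`, encoded as triples `(a, s, b)` where
`a` and `b` list the segments before and after `s`. -/
noncomputable def markedSegF (w : List Γ) : Finset (List (List Γ) × List Γ × List (List Γ)) :=
  ((SegF w).sigma fun _ => Finset.univ).map (markedListEquiv (List Γ)).toEmbedding

theorem mem_markedSegF {w s : List Γ} {a b : List (List Γ)} :
    (a, s, b) ∈ markedSegF w ↔
      a ∈ SegF a.flatten ∧ s ≠ [] ∧ b ∈ SegF b.flatten ∧ a.flatten ++ (s ++ b.flatten) = w := by
  rw [markedSegF, Finset.mem_map_equiv]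
  simp [markedListEquiv, mem_SegF, or_imp, forall_and, and_assoc]

theorem mem_markedSegF_of_mem_substringPositions {w : List Γ} {i j : ℕ}
    (hij : (i, j) ∈ substringPositions w.length) {a b : List (List Γ)}
    (ha : a ∈ SegF (w.take i)) (hb : b ∈ SegF (w.drop j)) :
    (a, (w.drop i).take (j - i), b) ∈ markedSegF w := by
  rw [mem_substringPositions] at hij
  have hne : (w.drop i).take (j - i) ≠ [] := by
    rw [← List.length_pos_iff, List.length_take, List.length_drop]
    omega
  rw [mem_markedSegF, (mem_SegF.1 ha).2, (mem_SegF.1 hb).2]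
  exact ⟨ha, hne, hb, take_append_take_drop_append_drop w hij.1.le⟩

section Sums

variable {M : Type*} [AddCommMonoid M]

theorem sum_markedSegF_eq_sum_SegF (w : List Γ)
    (F : List (List Γ) × List Γ × List (List Γ) → M) :
    ∑ x ∈ markedSegF w, F x =
      ∑ g ∈ SegF w, ∑ k : Fin g.length, F (g.take k, g[k], g.drop (k + 1)) := by
  rw [markedSegF, Finset.sum_map, Finset.sum_sigma]
  rfl

theorem sum_markedSegF_eq_sum_substringPositions (w : List Γ)
    (F : List (List Γ) × List Γ × List (List Γ) → M) :
    ∑ x ∈ markedSegF w, F x =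
      ∑ q ∈ substringPositions w.length, ∑ y ∈ SegF (w.take q.1) ×ˢ SegF (w.drop q.2),
        F (y.1, (w.drop q.1).take (q.2 - q.1), y.2) := by
  rw [Finset.sum_sigma']
  refine Finset.sum_nbij'
    (fun x => ⟨(x.1.flatten.length, x.1.flatten.length + x.2.1.length), x.1, x.2.2⟩)
    (fun y => (y.2.1, (w.drop y.1.1).take (y.1.2 - y.1.1), y.2.2)) ?_ ?_ ?_ ?_ ?_
  · rintro ⟨a, s, b⟩ h
    obtain ⟨ha, hs, hb, rfl⟩ := mem_markedSegF.1 h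
    simp [mem_substringPositions, ha, hb, List.length_pos_iff.2 hs, ← List.drop_drop]
  · rintro ⟨⟨i, j⟩, a, b⟩ h
    obtain ⟨hij, hab⟩ := Finset.mem_sigma.1 h
    obtain ⟨ha, hb⟩ := Finset.mem_product.1 hab
    exact mem_markedSegF_of_mem_substringPositions hij ha hb
  · rintro ⟨a, s, b⟩ h
    obtain ⟨-, -, -, rfl⟩ := mem_markedSegF.1 h
    simp
  · rintro ⟨⟨i, j⟩, a, b⟩ h
    obtain ⟨hij, hab⟩ := Finset.mem_sigma.1 h
    obtain ⟨hlt, hle⟩ := mem_substringPositions.1 hij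
    have ha : a.flatten = w.take i := (mem_SegF.1 (Finset.mem_product.1 hab).1).2
    have hi : min i w.length = i := by omega
    have hj : i + min (j - i) (w.length - i) = j := by omega
    simp [ha, hi, hj]
  · rintro ⟨a, s, b⟩ h
    obtain ⟨-, -, -, rfl⟩ := mem_markedSegF.1 h
    simp

end Sums

/-- The total segmentation weight `B`, with values in an arbitrary semiring. -/
noncomputable def segWeight {R : Type*} [Semiring R] (p : List Γ → R) (u : List Γ) : R :=
  ∑ g ∈ SegF u, (g.map p).prod

theorem total_subword_weight_general {R M : Type*} [Semiring R] [AddCommMonoid M] [Module R M]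
    (p : List Γ → R) (f : List Γ → M) (w : List Γ) :
    ∑ q ∈ substringPositions w.length,
        (segWeight p (w.take q.1) * p ((w.drop q.1).take (q.2 - q.1)) *
          segWeight p (w.drop q.2)) • f ((w.drop q.1).take (q.2 - q.1)) =
      ∑ g ∈ SegF w, (g.map p).prod • (g.map f).sum := by
  have hprod (g : List (List Γ)) (k : Fin g.length) :
      ((g.take k).map p).prod * p g[k] * ((g.drop (k + 1)).map p).prod = (g.map p).prod := by
    simpa using prod_take_mul_getElem_mul_prod_drop (g.map p) (k := k) (by simp)
  calc
    _ = ∑ x ∈ markedSegF w,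
          ((x.1.map p).prod * p x.2.1 * (x.2.2.map p).prod) • f x.2.1 := by
      simp only [sum_markedSegF_eq_sum_substringPositions, Finset.sum_product_right, segWeight,
        Finset.sum_mul, Finset.mul_sum, Finset.sum_smul]
    _ = ∑ g ∈ SegF w, ∑ k : Fin g.length, (g.map p).prod • f g[k] := by
      simp only [sum_markedSegF_eq_sum_SegF, hprod]
    _ = ∑ g ∈ SegF w, (g.map p).prod • (g.map f).sum := by
      simp only [← Finset.smul_sum, Fin.getElem_fin, Fin.sum_univ_fun_getElem]

/-- Normalization identity (line 12 of Algorithm 1): the total unnormalized subword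
weight equals the sum over segmentations of the segmentation weight times the
number of segments. -/
theorem total_subword_weight (p : List Γ → ℝ) (w : List Γ) :
    ∑ q ∈ (Finset.range (w.length + 1) ×ˢ Finset.range (w.length + 1)).filter
        (fun q => q.1 < q.2),
        p ((w.drop q.1).take (q.2 - q.1)) * B p (w.take q.1) * B p (w.drop q.2)
      = ∑ g ∈ SegF w, (g.map p).prod * (g.length : ℝ) := by
  simpa [substringPositions, segWeight, B, mul_comm, mul_left_comm] using
    total_subword_weight_general p (fun _ => (1 : ℝ)) w
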